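/- A finite-order orientation-preserving diffeomorphism h of the 2-sphere with h ≠ id and h² = id has exactly two fixed points. -/

import Mathlib

/-!
A homotopy from `h` to the identity lifts `h` to the tautological bundle over the Riemann sphere,
that is, to the bundle of spinors. In the stereographic coordinate `z`, `h` is therefore a ratio
`v₁ / v₀` of continuous functions on the plane without common zeros, and the points which `h` maps
to `b z` are the zeros of `v₁ - b v₀`. If these are nondegenerate, their signed number is the
winding number of `v₁ - b v₀` at infinity.

Let `a` be a fixed point. For the constant `b = a` the only zero is `a` and the winding number is
`1`, so the derivative of `h` at `a` has positive determinant. It is also a linear involution of the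
plane, hence `1` or `-1`. If it is `1`, then `h` is the identity near `a`, since
`h z - z = -(h (h z) - h z)` while `h - id` has derivative zero; as fixed points of derivative `-1`
are isolated, this propagates to the whole sphere by connectedness, contradicting `h ≠ id`. So the
derivative is `-1` at every fixed point. For `b z = z` the zeros are then all positive, and their
number is the winding number `2`, provided that the centre of the stereographic projection is not
fixed, which is arranged by conjugating `h` with an isometry.
-/

open Metric Manifold

open Filter Topology ComplexConjugate

section WirtingerDerivatives

lemma exists_wirtinger (D : ℂ →L[ℝ] ℂ) :
    ∃ α β : ℂ, (∀ w, D w = α * w + β * conj w) ∧ D.det = ‖α‖ ^ 2 - ‖β‖ ^ 2 := by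
  have hD (w : ℂ) : D w = w.re * D 1 + w.im * D Complex.I := by
    calc D w = D (w.re • 1 + w.im • Complex.I) := by congr 1; simp
      _ = w.re * D 1 + w.im * D Complex.I := by
        rw [map_add, map_smul, map_smul, Complex.real_smul, Complex.real_smul]
  refine ⟨(D 1 - Complex.I * D Complex.I) / 2, (D 1 + Complex.I * D Complex.I) / 2,
    fun w ↦ ?_, ?_⟩
  · have hadd := Complex.add_conj w
    have hsub := Complex.sub_conj w
    push_cast at hadd hsub
    linear_combination hD w - D 1 / 2 * hadd + Complex.I * D Complex.I / 2 * hsub +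
      D Complex.I * w.im * Complex.I_sq
  · rw [ContinuousLinearMap.det, ← LinearMap.det_toMatrix Complex.basisOneI, Matrix.det_fin_two]
    simp only [LinearMap.toMatrix_apply, Complex.coe_basisOneI, Matrix.cons_val_zero,
      Matrix.cons_val_one, Matrix.cons_val_fin_one, ContinuousLinearMap.coe_coe,
      Complex.coe_basisOneI_repr, Complex.norm_div, Complex.norm_ofNat, div_pow, Complex.sq_norm,
      Complex.normSq_apply, Complex.sub_re, Complex.sub_im, Complex.add_re, Complex.add_im,
      Complex.mul_re, Complex.mul_im, Complex.I_re, Complex.I_im]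
    ring

end WirtingerDerivatives

section WindingNumber

/-- `f` has winding number `n` around the origin, encoded by the existence of a continuous
logarithm of `ζ ↦ f ζ / ζ ^ n` on the whole circle. -/
def HasWindingNumber (f : Circle → ℂ) (n : ℤ) : Prop :=
  ∃ u : Circle → ℂ, Continuous u ∧ ∀ ζ : Circle, f ζ = (ζ : ℂ) ^ n * Complex.exp (u ζ)

namespace HasWindingNumber

variable {f g : Circle → ℂ} {m n : ℤ}

lemma ne_zero (hf : HasWindingNumber f n) (ζ : Circle) : f ζ ≠ 0 := by
  obtain ⟨u, -, hfu⟩ := hf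
  rw [hfu]
  exact mul_ne_zero (zpow_ne_zero n ζ.coe_ne_zero) (Complex.exp_ne_zero _)

lemma continuous (hf : HasWindingNumber f n) : Continuous f := by
  obtain ⟨u, hu, hfu⟩ := hf
  have hpow : Continuous fun ζ : Circle ↦ (ζ : ℂ) ^ n :=
    Continuous.zpow₀ (by fun_prop) n fun ζ ↦ .inl ζ.coe_ne_zero
  exact (hpow.mul hu.cexp).congr fun ζ ↦ (hfu ζ).symm

lemma coe_zpow (n : ℤ) : HasWindingNumber (fun ζ ↦ (ζ : ℂ) ^ n) n :=
  ⟨0, continuous_const, fun ζ ↦ by simp⟩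

lemma const {c : ℂ} (hc : c ≠ 0) : HasWindingNumber (fun _ ↦ c) 0 :=
  ⟨fun _ ↦ Complex.log c, continuous_const, fun ζ ↦ by simp [Complex.exp_log hc]⟩

lemma mul (hf : HasWindingNumber f m) (hg : HasWindingNumber g n) :
    HasWindingNumber (fun ζ ↦ f ζ * g ζ) (m + n) := by
  obtain ⟨u, hu, hfu⟩ := hf
  obtain ⟨v, hv, hgv⟩ := hg
  refine ⟨u + v, hu.add hv, fun ζ ↦ ?_⟩
  beta_reduce
  rw [hfu, hgv, zpow_add₀ ζ.coe_ne_zero, Pi.add_apply, Complex.exp_add]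
  ring

lemma prod {ι : Type*} (s : Finset ι) {f : ι → Circle → ℂ} {n : ι → ℤ}
    (hf : ∀ i ∈ s, HasWindingNumber (f i) (n i)) :
    HasWindingNumber (fun ζ ↦ ∏ i ∈ s, f i ζ) (∑ i ∈ s, n i) := by
  classical
  induction s using Finset.induction_on with
  | empty => simpa using const one_ne_zero
  | insert i s hi ih =>
    simp only [Finset.prod_insert hi, Finset.sum_insert hi]
    exact (hf i (s.mem_insert_self i)).mul (ih fun j hj ↦ hf j (Finset.mem_insert_of_mem hj))

lemma star (hf : HasWindingNumber f n) : HasWindingNumber (fun ζ ↦ conj (f ζ)) (-n) := by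
  obtain ⟨u, hu, hfu⟩ := hf
  refine ⟨fun ζ ↦ conj (u ζ), Complex.continuous_conj.comp hu, fun ζ ↦ ?_⟩
  beta_reduce
  rw [hfu, map_mul, map_zpow₀, ← Complex.exp_conj, ← Circle.coe_inv_eq_conj, Circle.coe_inv,
    inv_zpow, zpow_neg]

/-- Rouché's theorem. -/
lemma of_norm_sub_lt (hg : HasWindingNumber g n) (hf : Continuous f)
    (hfg : ∀ ζ, ‖f ζ - g ζ‖ < ‖g ζ‖) : HasWindingNumber f n := by
  have hratio : ∀ ζ, f ζ / g ζ ∈ Complex.slitPlane := fun ζ ↦ by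
    have hsplit : f ζ / g ζ = 1 + (f ζ - g ζ) / g ζ := by
      rw [sub_div, div_self (hg.ne_zero ζ), add_sub_cancel]
    rw [hsplit]
    apply Complex.mem_slitPlane_of_norm_lt_one
    rw [norm_div, div_lt_one (norm_pos_iff.2 (hg.ne_zero ζ))]
    exact hfg ζ
  have hlog : HasWindingNumber (fun ζ ↦ f ζ / g ζ) 0 :=
    ⟨fun ζ ↦ Complex.log (f ζ / g ζ), (hf.div hg.continuous hg.ne_zero).clog hratio, fun ζ ↦ by
      simp [Complex.exp_log (Complex.slitPlane_ne_zero (hratio ζ))]⟩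
  simpa [div_mul_cancel₀ _ (hg.ne_zero _)] using hlog.mul hg

lemma comp_of_continuous_plane {Q : ℂ → ℂ} (hQ : Continuous Q) (hQ0 : ∀ z, Q z ≠ 0)
    {γ : Circle → ℂ} (hγ : Continuous γ) : HasWindingNumber (fun ζ ↦ Q (γ ζ)) 0 := by
  obtain ⟨u, ⟨-, hu⟩, -⟩ := Complex.isCoveringMap_exp.existsUnique_continuousMap_lifts
    (f := ⟨fun z ↦ (⟨Q z, hQ0 z⟩ : {z : ℂ // z ≠ 0}), by fun_prop⟩) (a₀ := 0)
    (e₀ := Complex.log (Q 0)) (by simp [Complex.exp_log (hQ0 0)])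
  refine ⟨fun ζ ↦ u (γ ζ), u.continuous.comp hγ, fun ζ ↦ ?_⟩
  simpa using congrArg Subtype.val (congrFun hu (γ ζ)).symm

lemma unique (hm : HasWindingNumber f m) (hn : HasWindingNumber f n) : m = n := by
  obtain ⟨u, hu, hfu⟩ := hm
  obtain ⟨v, hv, hfv⟩ := hn
  let w : ℝ → ℂ := fun t ↦ u (Circle.exp t) - v (Circle.exp t) + (m - n : ℤ) * (t * Complex.I)
  have hw : Continuous w := by fun_prop
  have hexp : ∀ t, Complex.exp (w t) = 1 := fun t ↦ by
    have h := (hfu (Circle.exp t)).symm.trans (hfv (Circle.exp t))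
    simp only [w, Complex.exp_add, Complex.exp_sub, Complex.exp_int_mul, ← Circle.coe_exp]
    rw [zpow_sub₀ (Circle.coe_ne_zero _)]
    have := zpow_ne_zero n (Circle.exp t).coe_ne_zero
    have := Complex.exp_ne_zero (v (Circle.exp t))
    field_simp
    linear_combination h
  have hperiod : w (2 * Real.pi) = w 0 := Complex.isCoveringMap_exp.const_of_comp hw
    (fun s t ↦ Subtype.ext ((hexp s).trans (hexp t).symm)) _ _
  have hsub : ((m - n : ℤ) : ℂ) * (2 * Real.pi * Complex.I) = 0 := by
    simp only [w, Circle.exp_two_pi, Circle.exp_zero] at hperiod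
    push_cast at hperiod ⊢
    linear_combination hperiod
  have := (mul_eq_zero.1 hsub).resolve_right Complex.two_pi_I_ne_zero
  exact sub_eq_zero.1 (Int.cast_eq_zero.1 this)

lemma scale_sub {R : ℝ} {a : ℂ} (ha : ‖a‖ < R) :
    HasWindingNumber (fun ζ ↦ (R : ℂ) * ζ - a) 1 := by
  have hR : 0 < R := (norm_nonneg a).trans_lt ha
  have hscale : HasWindingNumber (fun ζ ↦ (R : ℂ) * ζ) 1 := by
    simpa using (const (Complex.ofReal_ne_zero.2 hR.ne')).mul (coe_zpow 1)
  exact hscale.of_norm_sub_lt (by fun_prop) fun ζ ↦ by simpa [abs_of_pos hR, ζ.norm_coe] using ha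

lemma linear (hf : HasWindingNumber f n) {D : ℂ →L[ℝ] ℂ} (hD : D.det ≠ 0) :
    HasWindingNumber (fun ζ ↦ D (f ζ)) (SignType.sign D.det * n) := by
  obtain ⟨α, β, hαβ, hdet⟩ := exists_wirtinger D
  have hcont : Continuous fun ζ ↦ D (f ζ) := D.continuous.comp hf.continuous
  have hnorm (ζ) : 0 < ‖f ζ‖ := norm_pos_iff.2 (hf.ne_zero ζ)
  rcases hD.lt_or_gt with hneg | hpos
  · have hlt : ‖α‖ < ‖β‖ := by nlinarith [norm_nonneg α, norm_nonneg β]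
    have hβ : β ≠ 0 := norm_pos_iff.1 ((norm_nonneg α).trans_lt hlt)
    have hmain : HasWindingNumber (fun ζ ↦ β * conj (f ζ)) (-n) := by
      simpa using (const hβ).mul hf.star
    simp only [sign_neg hneg, SignType.coe_neg_one, neg_one_mul]
    exact hmain.of_norm_sub_lt hcont fun ζ ↦ by
      simpa [hαβ] using mul_lt_mul_of_pos_right hlt (hnorm ζ)
  · have hlt : ‖β‖ < ‖α‖ := by nlinarith [norm_nonneg α, norm_nonneg β]
    have hα : α ≠ 0 := norm_pos_iff.1 ((norm_nonneg β).trans_lt hlt)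
    have hmain : HasWindingNumber (fun ζ ↦ α * f ζ) n := by
      simpa using (const hα).mul hf
    simp only [sign_pos hpos, SignType.coe_one, one_mul]
    exact hmain.of_norm_sub_lt hcont fun ζ ↦ by
      simpa [hαβ] using mul_lt_mul_of_pos_right hlt (hnorm ζ)

end HasWindingNumber

end WindingNumber

section Factorization

variable {X 𝕜 : Type*} [TopologicalSpace X] [T1Space X] [NormedField 𝕜]

open Classical in
lemma continuous_update_div {f l : X → 𝕜} {a : X} {d : 𝕜} (hf : Continuous f) (hl : Continuous l)
    (hl0 : ∀ x, x ≠ a → l x ≠ 0) (hd : Tendsto (fun x ↦ f x / l x) (𝓝[≠] a) (𝓝 d)) :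
    Continuous (Function.update (fun x ↦ f x / l x) a d) := by
  refine continuous_iff_continuousAt.2 fun x ↦ ?_
  rcases eq_or_ne x a with rfl | hx
  · exact continuousAt_update_same.2 hd
  · exact (continuousAt_update_of_ne hx).2 (hf.continuousAt.div hl.continuousAt (hl0 x hx))

lemma exists_eq_mul_prod (F : Finset X) {f : X → 𝕜} (hf : Continuous f)
    (hzero : ∀ x, f x = 0 ↔ x ∈ F) (l : X → X → 𝕜) (hl : ∀ a ∈ F, Continuous (l a))
    (hl0 : ∀ a ∈ F, ∀ x, l a x = 0 ↔ x = a)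
    (hlim : ∀ a ∈ F, ∃ d, d ≠ 0 ∧ Tendsto (fun x ↦ f x / l a x) (𝓝[≠] a) (𝓝 d)) :
    ∃ q : X → 𝕜, Continuous q ∧ (∀ x, q x ≠ 0) ∧ ∀ x, f x = q x * ∏ a ∈ F, l a x := by
  classical
  induction F using Finset.induction_on generalizing f with
  | empty => exact ⟨f, hf, fun x ↦ by simp [hzero], fun x ↦ by simp⟩
  | insert a F ha ih =>
    simp only [Finset.forall_mem_insert] at hl hl0 hlim
    obtain ⟨⟨d, hd0, hd⟩, hlim⟩ := hlim
    set g := Function.update (fun x ↦ f x / l a x) a d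
    have hg_of_ne {x} (hx : x ≠ a) : g x = f x / l a x := Function.update_of_ne hx _ _
    have hg_same : g a = d := Function.update_self _ _ _
    have hgzero (x) : g x = 0 ↔ x ∈ F := by
      rcases eq_or_ne x a with rfl | hx
      · simp [hg_same, hd0, ha]
      · simp [hg_of_ne hx, hl0.1, hzero, hx]
    have hglim (b) (hb : b ∈ F) : ∃ d, d ≠ 0 ∧ Tendsto (fun x ↦ g x / l b x) (𝓝[≠] b) (𝓝 d) := by
      have hba : b ≠ a := ne_of_mem_of_not_mem hb ha
      have hlab : l a b ≠ 0 := mt (hl0.1 b).1 hba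
      obtain ⟨e, he0, he⟩ := hlim b hb
      refine ⟨e / l a b, div_ne_zero he0 hlab,
        (he.div (hl.1.continuousAt.mono_left nhdsWithin_le_nhds) hlab).congr' ?_⟩
      filter_upwards [nhdsWithin_le_nhds (isOpen_ne.mem_nhds hba)] with x hx
      simp only [Pi.div_apply, hg_of_ne hx, div_right_comm]
    have hgcont : Continuous g := continuous_update_div hf hl.1 (fun x ↦ mt (hl0.1 x).1) hd
    obtain ⟨q, hq, hq0, hgq⟩ := ih hgcont hgzero hl.2 hl0.2 hglim
    refine ⟨q, hq, hq0, fun x ↦ ?_⟩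
    rw [Finset.prod_insert ha, mul_left_comm, ← hgq]
    rcases eq_or_ne x a with rfl | hx
    · rw [(hl0.1 x).2 rfl, zero_mul, (hzero x).2 (F.mem_insert_self x)]
    · rw [hg_of_ne hx, mul_div_cancel₀ _ (mt (hl0.1 x).1 hx)]

end Factorization

section SignedZeroCount

variable {f : ℂ → ℂ} {a : ℂ}

lemma map_eq_zero_iff_of_det_ne_zero {D : ℂ →L[ℝ] ℂ} (hD : D.det ≠ 0) {w : ℂ} : D w = 0 ↔ w = 0 :=
  (D.toContinuousLinearEquivOfDetNeZero hD).map_eq_zero_iff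

lemma differentiableAt_of_det_fderiv_ne_zero (ha : (fderiv ℝ f a).det ≠ 0) :
    DifferentiableAt ℝ f a := by
  by_contra h
  exact ha (by rw [fderiv_zero_of_not_differentiableAt h]; simp [ContinuousLinearMap.det])

lemma tendsto_div_fderiv {D : ℂ →L[ℝ] ℂ} (hf : HasFDerivAt f D a) (ha : f a = 0)
    (hD : D.det ≠ 0) : Tendsto (fun z ↦ f z / D (z - a)) (𝓝[≠] a) (𝓝 1) := by
  have hequiv : Asymptotics.IsEquivalent (𝓝 a) f fun z ↦ D (z - a) := by
    have h := hf.isLittleO.trans_isBigO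
      ((D.toContinuousLinearEquivOfDetNeZero hD).isBigO_sub_rev (𝓝 a) a)
    simpa [ha, Asymptotics.IsEquivalent, Pi.sub_def] using h
  refine (Asymptotics.isEquivalent_iff_tendsto_one ?_).1
    (hequiv.mono nhdsWithin_le_nhds)
  filter_upwards [self_mem_nhdsWithin] with z hz
  rwa [Ne, map_eq_zero_iff_of_det_ne_zero hD, sub_eq_zero]

lemma eventually_hasWindingNumber_comp_scale {k : ℤ} {e : ℂ} (hf : Continuous f) (he : e ≠ 0)
    (hlim : Tendsto (fun z ↦ f z / z ^ k) (cocompact ℂ) (𝓝 e)) :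
    ∀ᶠ R : ℝ in atTop, HasWindingNumber (fun ζ ↦ f (R * ζ)) k := by
  have hball := hlim.eventually (ball_mem_nhds e (norm_pos_iff.2 he))
  rw [← cobounded_eq_cocompact, hasBasis_cobounded_norm.eventually_iff] at hball
  obtain ⟨r, -, hr⟩ := hball
  filter_upwards [eventually_ge_atTop r, eventually_gt_atTop 0] with R hrR hR
  have hR0 : (R : ℂ) ≠ 0 := Complex.ofReal_ne_zero.2 hR.ne'
  have hpow : HasWindingNumber (fun ζ ↦ e * R ^ k * (ζ : ℂ) ^ k) k := by
    simpa using (HasWindingNumber.const (mul_ne_zero he (zpow_ne_zero k hR0))).mul (.coe_zpow k)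
  refine hpow.of_norm_sub_lt (hf.comp (by fun_prop)) fun ζ ↦ ?_
  have hz : (R * ζ : ℂ) ^ k ≠ 0 := zpow_ne_zero k (mul_ne_zero hR0 ζ.coe_ne_zero)
  have hclose : ‖f (R * ζ) / (R * ζ) ^ k - e‖ < ‖e‖ :=
    mem_ball_iff_norm.1 (hr (by simpa [ζ.norm_coe, abs_of_pos hR] using hrR))
  calc ‖f (R * ζ) - e * R ^ k * (ζ : ℂ) ^ k‖
      = ‖f (R * ζ) / (R * ζ) ^ k - e‖ * ‖(R * ζ : ℂ) ^ k‖ := by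
        rw [← norm_mul, sub_mul, div_mul_cancel₀ _ hz, mul_zpow, mul_assoc]
    _ < ‖e‖ * ‖(R * ζ : ℂ) ^ k‖ := mul_lt_mul_of_pos_right hclose (norm_pos_iff.2 hz)
    _ = ‖e * R ^ k * (ζ : ℂ) ^ k‖ := by rw [← norm_mul, mul_zpow, mul_assoc]

theorem sum_sign_det_fderiv_eq (F : Finset ℂ) (hf : Continuous f) (hzero : ∀ z, f z = 0 ↔ z ∈ F)
    (hdet : ∀ a ∈ F, (fderiv ℝ f a).det ≠ 0) {k : ℤ} {e : ℂ} (he : e ≠ 0)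
    (hlim : Tendsto (fun z ↦ f z / z ^ k) (cocompact ℂ) (𝓝 e)) :
    ∑ a ∈ F, (SignType.sign (fderiv ℝ f a).det : ℤ) = k := by
  have hdiff (a) (ha : a ∈ F) : DifferentiableAt ℝ f a :=
    differentiableAt_of_det_fderiv_ne_zero (hdet a ha)
  obtain ⟨q, hq, hq0, hfq⟩ := exists_eq_mul_prod F hf hzero (fun a z ↦ fderiv ℝ f a (z - a))
    (fun a _ ↦ by fun_prop)
    (fun a ha z ↦ by rw [map_eq_zero_iff_of_det_ne_zero (hdet a ha), sub_eq_zero])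
    (fun a ha ↦ ⟨1, one_ne_zero,
      tendsto_div_fderiv (hdiff a ha).hasFDerivAt ((hzero a).2 ha) (hdet a ha)⟩)
  have hlarge : ∀ᶠ R : ℝ in atTop, ∀ a ∈ F, ‖a‖ < R :=
    F.eventually_all.2 fun a _ ↦ eventually_gt_atTop ‖a‖
  obtain ⟨R, hR, hwind⟩ := (hlarge.and (eventually_hasWindingNumber_comp_scale hf he hlim)).exists
  have hprod : HasWindingNumber (fun ζ ↦ f (R * ζ))
      (0 + ∑ a ∈ F, (SignType.sign (fderiv ℝ f a).det : ℤ) * 1) := by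
    simp only [hfq]
    exact (HasWindingNumber.comp_of_continuous_plane hq hq0 (by fun_prop)).mul
      (.prod F fun a ha ↦ (HasWindingNumber.scale_sub (hR a ha)).linear (hdet a ha))
  simpa using hprod.unique hwind

lemma finite_zeros (hf : Continuous f) (hdet : ∀ a, f a = 0 → (fderiv ℝ f a).det ≠ 0)
    (hinf : ∀ᶠ z in cocompact ℂ, f z ≠ 0) : {z | f z = 0}.Finite := by
  obtain ⟨K, hK, hzK⟩ := mem_cocompact'.1 hinf
  have hcompact : IsCompact {z | f z = 0} :=
    hK.of_isClosed_subset (isClosed_singleton.preimage hf) fun z hz ↦ hzK (not_not.2 hz)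
  by_contra hinfinite
  obtain ⟨a, ha, hacc⟩ :=
    Set.Infinite.exists_accPt_of_subset_isCompact hinfinite hcompact subset_rfl
  have hanti : ∃ C, AntilipschitzWith C (fderiv ℝ f a) :=
    ⟨_, ((fderiv ℝ f a).toContinuousLinearEquivOfDetNeZero (hdet a ha)).antilipschitz⟩
  exact accPt_iff_frequently_nhdsNE.1 hacc <|
    (differentiableAt_of_det_fderiv_ne_zero (hdet a ha)).hasFDerivAt.eventually_ne hanti

lemma ncard_zeros_eq (hf : Continuous f) (hdet : ∀ a, f a = 0 → 0 < (fderiv ℝ f a).det) {k : ℤ}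
    {e : ℂ} (he : e ≠ 0) (hlim : Tendsto (fun z ↦ f z / z ^ k) (cocompact ℂ) (𝓝 e)) :
    ({z | f z = 0}.ncard : ℤ) = k := by
  have hinf : ∀ᶠ z in cocompact ℂ, f z ≠ 0 :=
    (hlim.eventually_ne he).mono fun z hz h0 ↦ hz (by rw [h0, zero_div])
  have hfin := finite_zeros hf (fun a ha ↦ (hdet a ha).ne') hinf
  rw [← sum_sign_det_fderiv_eq hfin.toFinset hf (fun z ↦ by simp)
    (fun a ha ↦ (hdet a (by simpa using ha)).ne') he hlim, Set.ncard_eq_toFinset_card _ hfin,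
    Finset.sum_congr rfl fun a ha ↦ by rw [sign_pos (hdet a (by simpa using ha))]]
  simp

end SignedZeroCount

section Homotopy

lemma homotopic_induction_of_dist_lt {X Y : Type*} [TopologicalSpace X] [CompactSpace X]
    [PseudoMetricSpace Y] {P : C(X, Y) → Prop} {ε : ℝ} (hε : 0 < ε)
    (hP : ∀ φ ψ, dist ψ φ < ε → P φ → P ψ) {φ ψ : C(X, Y)}
    (hφψ : φ.Homotopic ψ) (hφ : P φ) : P ψ := by
  obtain ⟨F⟩ := hφψ
  have hconst : IsLocallyConstant fun t ↦ P (F.curry t) := by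
    refine IsLocallyConstant.iff_eventually_eq _ |>.2 fun t ↦ ?_
    filter_upwards [F.curry.continuous.tendsto t (ball_mem_nhds _ hε)] with s hs
    exact propext ⟨hP _ _ (mem_ball'.1 hs), hP _ _ (mem_ball.1 hs)⟩
  have h := hconst.apply_eq_of_preconnectedSpace 0 1
  have h0 : F.curry 0 = φ := ContinuousMap.ext F.apply_zero
  have h1 : F.curry 1 = ψ := ContinuousMap.ext F.apply_one
  rw [h0, h1] at h
  exact h ▸ hφ

end Homotopy

open Matrix

local notation "ℝ³" => EuclideanSpace ℝ (Fin 3)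
local notation "𝕊²" => sphere (0 : EuclideanSpace ℝ (Fin 3)) 1

section SpinLift

/-- Clifford multiplication by a vector of `ℝ³` on the two-dimensional space of spinors, written
in the Pauli matrices. -/
def pauli : ℝ³ →ₗ[ℝ] Matrix (Fin 2) (Fin 2) ℂ where
  toFun x := !![(x 2 : ℂ), x 0 - x 1 * Complex.I; x 0 + x 1 * Complex.I, -x 2]
  map_add' x y := by ext i j; fin_cases i <;> fin_cases j <;> simp <;> ring
  map_smul' c x := by ext i j; fin_cases i <;> fin_cases j <;> simp <;> ring

lemma pauli_apply (x : ℝ³) :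
    pauli x = !![(x 2 : ℂ), x 0 - x 1 * Complex.I; x 0 + x 1 * Complex.I, -x 2] := rfl

lemma pauli_mul_self (x : ℝ³) : pauli x * pauli x = ((‖x‖ ^ 2 : ℝ) : ℂ) • 1 := by
  rw [pauli_apply, EuclideanSpace.real_norm_sq_eq, Fin.sum_univ_three]
  ext i j
  fin_cases i <;> fin_cases j <;>
    simp only [mul_fin_two, Fin.zero_eta, Fin.mk_one, Matrix.smul_apply, smul_eq_mul, one_apply_eq,
      one_apply_ne zero_ne_one, one_apply_ne one_ne_zero, of_apply, cons_val', cons_val_zero,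
      cons_val_one, cons_val_fin_one, Complex.ofReal_add, Complex.ofReal_pow]
  · linear_combination -(x 1 : ℂ) ^ 2 * Complex.I_sq
  · ring
  · ring
  · linear_combination -(x 1 : ℂ) ^ 2 * Complex.I_sq

lemma pauli_mul_self_sphere (x : 𝕊²) : pauli x * pauli x = 1 := by
  simp [pauli_mul_self]

lemma isUnit_pauli {x : ℝ³} (hx : x ≠ 0) : IsUnit (pauli x) := by
  have hc : ((‖x‖ ^ 2 : ℝ) : ℂ) ≠ 0 := by simpa using hx
  refine IsUnit.of_mul_eq_one (((‖x‖ ^ 2 : ℝ) : ℂ)⁻¹ • pauli x) ?_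
  rw [mul_smul_comm, pauli_mul_self, smul_smul, inv_mul_cancel₀ hc, one_smul]

lemma eq_of_pauli_mulVec_eq {x y : ℝ³} {v : Fin 2 → ℂ} (hv : v ≠ 0)
    (h : pauli x *ᵥ v = pauli y *ᵥ v) : x = y := by
  by_contra hxy
  refine hv (Matrix.mulVec_injective_of_isUnit (isUnit_pauli (sub_ne_zero.2 hxy)) ?_)
  rw [map_sub, sub_mulVec, h, sub_self, mulVec_zero]

/-- `v` spans the line of spinors at the unit vector `x`, the `+1`-eigenline of `pauli x`. -/
def IsSpinor (x : 𝕊²) (v : Fin 2 → ℂ) : Prop :=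
  pauli x *ᵥ v = v ∧ v ≠ 0

lemma IsSpinor.eq_of_eq {x y : 𝕊²} {v : Fin 2 → ℂ} (hx : IsSpinor x v) (hy : IsSpinor y v) :
    x = y :=
  Subtype.ext (eq_of_pauli_mulVec_eq hx.2 (hx.1.trans hy.1.symm))

/-- `M` is a lift of `φ : 𝕊² → 𝕊²` to the trivial bundle of spinors: an invertible matrix at
every point, intertwining Clifford multiplication by `x` and by `φ x`. -/
structure IsSpinLift (M : 𝕊² → Matrix (Fin 2) (Fin 2) ℂ) (φ : 𝕊² → 𝕊²) : Prop where
  continuous : Continuous M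
  isUnit : ∀ x, IsUnit (M x)
  mul_pauli : ∀ x, M x * pauli x = pauli (φ x) * M x

namespace IsSpinLift

variable {M : 𝕊² → Matrix (Fin 2) (Fin 2) ℂ} {φ ψ : 𝕊² → 𝕊²}

protected lemma id : IsSpinLift (fun _ ↦ 1) id :=
  ⟨continuous_const, fun _ ↦ isUnit_one, fun x ↦ by simp⟩

lemma isSpinor (hM : IsSpinLift M φ) {x : 𝕊²} {v : Fin 2 → ℂ} (hv : IsSpinor x v) :
    IsSpinor (φ x) (M x *ᵥ v) := by
  refine ⟨by rw [mulVec_mulVec, ← hM.mul_pauli, ← mulVec_mulVec, hv.1], fun h0 ↦ hv.2 ?_⟩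
  exact Matrix.mulVec_injective_of_isUnit (hM.isUnit x) (h0.trans (mulVec_zero _).symm)

/-- `pauli (ψ x) * pauli (ψ x + φ x) = 1 + pauli (ψ x) * pauli (φ x)` is the unnormalised rotor
taking `φ x` to `ψ x`. -/
lemma of_ne_neg (hM : IsSpinLift M φ) (hφ : Continuous φ) (hψ : Continuous ψ)
    (hne : ∀ x, (ψ x : ℝ³) + φ x ≠ 0) :
    IsSpinLift (fun x ↦ pauli (ψ x) * pauli (ψ x + φ x) * M x) ψ := by
  have hpauli : Continuous pauli := pauli.continuous_of_finiteDimensional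
  refine ⟨?_, fun x ↦ ?_, fun x ↦ ?_⟩
  · exact ((hpauli.comp (by fun_prop)).mul (hpauli.comp (by fun_prop))).mul hM.continuous
  · exact ((isUnit_pauli (ne_zero_of_mem_unit_sphere _)).mul (isUnit_pauli (hne x))).mul
      (hM.isUnit x)
  · have hcomm : pauli (ψ x) * pauli (ψ x + φ x) * pauli (φ x) = pauli (ψ x + φ x) := by
      rw [map_add, mul_add, pauli_mul_self_sphere, add_mul, one_mul, mul_assoc,
        pauli_mul_self_sphere, mul_one, add_comm]
    calc pauli (ψ x) * pauli (ψ x + φ x) * M x * pauli x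
        = pauli (ψ x) * pauli (ψ x + φ x) * pauli (φ x) * M x := by
          rw [mul_assoc _ (M x), hM.mul_pauli, ← mul_assoc]
      _ = pauli (ψ x) * (pauli (ψ x) * pauli (ψ x + φ x) * M x) := by
          rw [hcomm, ← mul_assoc, ← mul_assoc, pauli_mul_self_sphere, one_mul]

end IsSpinLift

lemma exists_isSpinLift_of_homotopic_id {φ : C(𝕊², 𝕊²)} (hφ : φ.Homotopic (.id _)) :
    ∃ M, IsSpinLift M φ := by
  refine homotopic_induction_of_dist_lt (P := fun φ : C(𝕊², 𝕊²) ↦ ∃ M, IsSpinLift M φ)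
    two_pos (fun φ ψ hφψ ⟨M, hM⟩ ↦ ?_) hφ.symm ⟨_, .id⟩
  refine ⟨_, hM.of_ne_neg φ.continuous ψ.continuous fun x hx ↦ ?_⟩
  have hdist : dist (ψ x) (φ x) = 2 := by
    rw [Subtype.dist_eq, dist_eq_norm, eq_neg_of_add_eq_zero_right hx, sub_neg_eq_add, ← two_smul ℝ,
      norm_smul]
    simp
  exact (hdist ▸ ContinuousMap.dist_apply_le_dist x).not_gt hφψ

end SpinLift

section Stereographic

variable {x : 𝕊²} {v : Fin 2 → ℂ} {z : ℂ}

lemma one_add_norm_sq_ne_zero (z : ℂ) : 1 + ‖z‖ ^ 2 ≠ 0 := by positivity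

lemma norm_sq_coords (x : 𝕊²) : (x : ℝ³) 0 ^ 2 + (x : ℝ³) 1 ^ 2 + (x : ℝ³) 2 ^ 2 = 1 := by
  rw [← Fin.sum_univ_three (fun i ↦ (x : ℝ³) i ^ 2), ← EuclideanSpace.real_norm_sq_eq]
  simp

/-- The centre of the stereographic projection. -/
def southPole : 𝕊² := ⟨!₂[0, 0, -1], by simp [EuclideanSpace.norm_eq, Fin.sum_univ_three]⟩

/-- Inverse stereographic projection from `southPole` onto the equatorial plane, identified with
`ℂ`; the stereographic coordinate is the ratio of the components of a spinor. -/
noncomputable def stereoInv (z : ℂ) : 𝕊² :=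
  ⟨(1 + ‖z‖ ^ 2)⁻¹ • !₂[2 * z.re, 2 * z.im, 1 - ‖z‖ ^ 2], by
    have := one_add_norm_sq_ne_zero z
    rw [mem_sphere_zero_iff_norm, ← sq_eq_sq₀ (norm_nonneg _) zero_le_one,
      EuclideanSpace.real_norm_sq_eq, Fin.sum_univ_three]
    simp only [PiLp.smul_apply, cons_val_zero, smul_eq_mul, cons_val_one, cons_val, one_pow]
    field_simp
    simp only [Complex.sq_norm, Complex.normSq_apply]
    ring⟩

/-- Stereographic projection from `southPole`, with the junk value `0` at `southPole`. -/
noncomputable def stereoCoord (x : ℝ³) : ℂ :=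
  (x 0 + x 1 * Complex.I) / (1 + x 2)

lemma coe_stereoInv (z : ℂ) :
    (stereoInv z : ℝ³) = (1 + ‖z‖ ^ 2)⁻¹ • !₂[2 * z.re, 2 * z.im, 1 - ‖z‖ ^ 2] := rfl

lemma contDiff_stereoInv {n : WithTop ℕ∞} : ContDiff ℝ n fun z ↦ (stereoInv z : ℝ³) := by
  have hnorm : ContDiff ℝ n fun z : ℂ ↦ ‖z‖ ^ 2 := contDiff_norm_sq ℝ
  have hre : ContDiff ℝ n Complex.re := Complex.reCLM.contDiff
  have him : ContDiff ℝ n Complex.im := Complex.imCLM.contDiff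
  refine ((contDiff_const.add hnorm).inv one_add_norm_sq_ne_zero).smul ?_
  refine contDiff_euclidean.2 fun i ↦ ?_
  fin_cases i
  · exact contDiff_const.mul hre
  · exact contDiff_const.mul him
  · exact contDiff_const.sub hnorm

lemma continuous_stereoInv : Continuous stereoInv :=
  Continuous.subtype_mk (contDiff_stereoInv (n := 0)).continuous _

lemma tendsto_stereoInv_cocompact : Tendsto stereoInv (cocompact ℂ) (𝓝 southPole) := by
  have hdist (z : ℂ) : dist (stereoInv z) southPole ^ 2 = 4 * (1 + ‖z‖ ^ 2)⁻¹ := by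
    have := one_add_norm_sq_ne_zero z
    rw [Subtype.dist_eq, dist_eq_norm, EuclideanSpace.real_norm_sq_eq, Fin.sum_univ_three]
    simp only [coe_stereoInv, southPole, PiLp.sub_apply, PiLp.smul_apply, cons_val_zero,
      smul_eq_mul, sub_zero, cons_val_one, cons_val, sub_neg_eq_add]
    field_simp
    simp only [Complex.sq_norm, Complex.normSq_apply]
    ring
  have hsq : Tendsto (fun z ↦ dist (stereoInv z) southPole ^ 2) (cocompact ℂ) (𝓝 0) := by
    simp only [hdist]
    rw [← mul_zero (4 : ℝ)]
    exact (tendsto_inv_atTop_zero.comp (tendsto_atTop_add_const_left _ 1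
      ((tendsto_pow_atTop two_ne_zero).comp (tendsto_norm_cocompact_atTop (E := ℂ))))).const_mul 4
  rw [tendsto_iff_dist_tendsto_zero]
  simpa using hsq.sqrt

lemma isSpinor_iff : IsSpinor x v ↔
    ((x : ℝ³) 2 * v 0 + ((x : ℝ³) 0 - (x : ℝ³) 1 * Complex.I) * v 1 = v 0 ∧
      ((x : ℝ³) 0 + (x : ℝ³) 1 * Complex.I) * v 0 - (x : ℝ³) 2 * v 1 = v 1) ∧ v ≠ 0 := by
  simp only [IsSpinor, pauli_apply, funext_iff, Fin.forall_fin_two, mulVec, dotProduct,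
    Fin.sum_univ_two]
  simp [sub_eq_add_neg]

lemma IsSpinor.smul (hv : IsSpinor x v) {c : ℂ} (hc : c ≠ 0) : IsSpinor x (c • v) :=
  ⟨by rw [mulVec_smul, hv.1], smul_ne_zero hc hv.2⟩

lemma isSpinor_southPole : IsSpinor southPole ![0, 1] := by
  simp [isSpinor_iff, southPole]

lemma isSpinor_stereoInv (z : ℂ) : IsSpinor (stereoInv z) ![1, z] := by
  have hne : (1 + (‖z‖ : ℂ) ^ 2) ≠ 0 := mod_cast one_add_norm_sq_ne_zero z
  have hz : (z.re + z.im * Complex.I : ℂ) = z := Complex.re_add_im z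
  have hconj : (z.re - z.im * Complex.I : ℂ) = conj z := by apply Complex.ext <;> simp
  refine isSpinor_iff.2 ⟨?_, by simp⟩
  simp only [coe_stereoInv, PiLp.smul_apply, cons_val, smul_eq_mul, Complex.ofReal_mul,
    Complex.ofReal_inv, Complex.ofReal_add, Complex.ofReal_one, Complex.ofReal_pow,
    Complex.ofReal_sub, cons_val_zero, mul_one, Complex.ofReal_ofNat, cons_val_one,
    cons_val_fin_one]
  constructor
  · field_simp
    linear_combination 2 * z * hconj + 2 * Complex.conj_mul' z
  · field_simp
    linear_combination 2 * hz

lemma one_add_ne_zero_of_ne_southPole (hx : x ≠ southPole) : 1 + (x : ℝ³) 2 ≠ 0 := by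
  intro h2
  have hsum := norm_sq_coords x
  refine hx (Subtype.ext ?_)
  ext i
  fin_cases i <;> simp only [southPole, Fin.zero_eta, Fin.mk_one, Fin.reduceFinMk, cons_val,
    cons_val_zero, cons_val_one] <;> nlinarith [sq_nonneg ((x : ℝ³) 0), sq_nonneg ((x : ℝ³) 1)]

lemma isSpinor_stereoCoord (hx : x ≠ southPole) : IsSpinor x ![1, stereoCoord x] := by
  have hne : ((1 + (x : ℝ³) 2 : ℝ) : ℂ) ≠ 0 :=
    Complex.ofReal_ne_zero.2 (one_add_ne_zero_of_ne_southPole hx)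
  have hsum := congrArg Complex.ofReal (norm_sq_coords x)
  push_cast at hne hsum
  refine isSpinor_iff.2 ⟨?_, by simp⟩
  simp only [stereoCoord, cons_val_zero, mul_one, cons_val_one, cons_val_fin_one]
  constructor
  · field_simp
    linear_combination hsum - (x : ℝ³) 1 ^ 2 * Complex.I_sq
  · field_simp
    ring

lemma IsSpinor.eq_southPole (hv : IsSpinor x v) (h0 : v 0 = 0) : x = southPole := by
  have hv1 : v = v 1 • ![0, 1] := by ext i; fin_cases i <;> simp [h0]
  have h1 : v 1 ≠ 0 := fun h1 ↦ hv.2 (by rw [hv1, h1, zero_smul])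
  exact hv.eq_of_eq (hv1 ▸ isSpinor_southPole.smul h1)

lemma stereoInv_stereoCoord (hx : x ≠ southPole) : stereoInv (stereoCoord x) = x :=
  (isSpinor_stereoInv _).eq_of_eq (isSpinor_stereoCoord hx)

lemma IsSpinor.apply_one_eq (hv : IsSpinor x v) (hx : x ≠ southPole) :
    v 1 = stereoCoord x * v 0 := by
  have hne : ((1 + (x : ℝ³) 2 : ℝ) : ℂ) ≠ 0 :=
    Complex.ofReal_ne_zero.2 (one_add_ne_zero_of_ne_southPole hx)
  push_cast at hne
  rw [stereoCoord]
  field_simp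
  linear_combination -(isSpinor_iff.1 hv).1.2

lemma stereoInv_ne_southPole (z : ℂ) : stereoInv z ≠ southPole := fun h ↦ by
  have h0 := (isSpinor_iff.1 (h ▸ isSpinor_stereoInv z)).1.1
  simp [southPole, neg_eq_iff_add_eq_zero, one_add_one_eq_two] at h0

lemma stereoCoord_stereoInv (z : ℂ) : stereoCoord (stereoInv z) = z := by
  simpa using ((isSpinor_stereoInv z).apply_one_eq (stereoInv_ne_southPole z)).symm

lemma stereoInv_injective : Function.Injective stereoInv :=
  Function.LeftInverse.injective (g := fun x : 𝕊² ↦ stereoCoord x) stereoCoord_stereoInv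

lemma IsSpinor.eq_stereoInv_iff (hv : IsSpinor x v) : x = stereoInv z ↔ v 1 - z * v 0 = 0 := by
  refine ⟨?_, fun h ↦ ?_⟩
  · rintro rfl
    rw [hv.apply_one_eq (stereoInv_ne_southPole z), stereoCoord_stereoInv, sub_self]
  · have h0 : v 0 ≠ 0 := fun h0 ↦ hv.2 <| by
      ext i
      fin_cases i <;> simp_all
    have hv1 : v = v 0 • ![1, z] := by
      ext i
      fin_cases i <;> simp [sub_eq_zero.1 h, mul_comm]
    exact hv.eq_of_eq (hv1 ▸ (isSpinor_stereoInv z).smul h0)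

lemma contDiffAt_stereoCoord (hx : x ≠ southPole) {n : WithTop ℕ∞} :
    ContDiffAt ℝ n stereoCoord (x : ℝ³) := by
  have hcoord (i : Fin 3) : ContDiff ℝ n fun y : ℝ³ ↦ (y i : ℂ) :=
    Complex.ofRealCLM.contDiff.comp (contDiff_euclidean.1 contDiff_id i)
  have hne : ((1 + (x : ℝ³) 2 : ℝ) : ℂ) ≠ 0 :=
    Complex.ofReal_ne_zero.2 (one_add_ne_zero_of_ne_southPole hx)
  push_cast at hne
  unfold stereoCoord
  simp only [div_eq_mul_inv]
  exact ((hcoord 0).add ((hcoord 1).mul contDiff_const)).contDiffAt.mul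
    ((contDiff_const.add (hcoord 2)).contDiffAt.inv hne)

end Stereographic

section HomogeneousLift

lemma tendsto_inv_cocompact {𝕜 : Type*} [NormedDivisionRing 𝕜] [ProperSpace 𝕜] :
    Tendsto (fun z : 𝕜 ↦ z⁻¹) (cocompact 𝕜) (𝓝 0) := by
  rw [← cobounded_eq_cocompact]
  exact tendsto_inv₀_cobounded

/-- A spin lift `M` of `h`, written in homogeneous coordinates over the stereographic chart: the
ratio of the components of `homogeneousLift M z` is the stereographic coordinate of
`h (stereoInv z)`. -/
noncomputable def homogeneousLift (M : 𝕊² → Matrix (Fin 2) (Fin 2) ℂ) (z : ℂ) : Fin 2 → ℂ :=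
  M (stereoInv z) *ᵥ ![1, z]

variable {M : 𝕊² → Matrix (Fin 2) (Fin 2) ℂ} {h : 𝕊² → 𝕊²} (hM : IsSpinLift M h)
include hM

lemma continuous_homogeneousLift : Continuous (homogeneousLift M) :=
  (hM.continuous.comp continuous_stereoInv).matrix_mulVec (by fun_prop)

lemma isSpinor_homogeneousLift (z : ℂ) : IsSpinor (h (stereoInv z)) (homogeneousLift M z) :=
  hM.isSpinor (isSpinor_stereoInv z)

lemma tendsto_homogeneousLift_div (i : Fin 2) :
    Tendsto (fun z ↦ homogeneousLift M z i / z) (cocompact ℂ) (𝓝 ((M southPole *ᵥ ![0, 1]) i)) := by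
  have hvec : Tendsto (fun z : ℂ ↦ ![z⁻¹, 1]) (cocompact ℂ) (𝓝 ![0, 1]) :=
    ((show Continuous fun w : ℂ ↦ ![w, 1] by fun_prop).tendsto 0).comp tendsto_inv_cocompact
  have hlim := ((continuous_fst.matrix_mulVec continuous_snd).tendsto
    (M southPole, ![(0 : ℂ), 1])).comp
      (((hM.continuous.tendsto southPole).comp tendsto_stereoInv_cocompact).prodMk_nhds hvec)
  refine ((continuous_apply i).tendsto _ |>.comp hlim).congr' ?_
  filter_upwards [(eventually_cofinite_ne (0 : ℂ)).filter_mono (cocompact_le_cofinite)] with z hz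
  have hscale : ![1, z] = z • ![z⁻¹, 1] := by simp [hz]
  rw [homogeneousLift, hscale, mulVec_smul, Pi.smul_apply, smul_eq_mul, mul_div_cancel_left₀ _ hz]
  rfl

end HomogeneousLift

section Involution

variable {E : Type*} [NormedAddCommGroup E] [NormedSpace ℝ E] {g : E → E} {a : E}

lemma hasFDerivAt_comp_self_of_involutive {D : E →L[ℝ] E} (hg : HasFDerivAt g D a) (ha : g a = a)
    (hinv : ∀ᶠ z in 𝓝 a, g (g z) = z) : D.comp D = .id ℝ E := by
  have hcomp : HasFDerivAt (g ∘ g) (D.comp D) a := .comp a (by rwa [ha]) hg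
  exact hcomp.unique ((hasFDerivAt_id a).congr_of_eventuallyEq hinv)

lemma eventually_eq_self_of_involutive (hg : HasStrictFDerivAt g (.id ℝ E) a) (ha : g a = a)
    (hinv : ∀ᶠ z in 𝓝 a, g (g z) = z) : ∀ᶠ z in 𝓝 a, g z = z := by
  have hpair : Tendsto (fun z ↦ (z, g z)) (𝓝 a) (𝓝 (a, a)) := by
    simpa [ha] using (continuousAt_id.prodMk hg.continuousAt).tendsto
  filter_upwards [hpair.eventually (hg.isLittleO.def one_pos), hinv] with z hz hgz
  have htwice : g z - z - (z - g z) = (2 : ℝ) • (g z - z) := by module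
  rw [hgz, ContinuousLinearMap.id_apply, htwice, norm_smul, one_mul, norm_sub_rev z,
    Real.norm_ofNat] at hz
  exact sub_eq_zero.1 (norm_le_zero_iff.1 (by linarith))

lemma eq_id_or_eq_neg_id_of_comp_self {D : ℂ →L[ℝ] ℂ} (hD : D.comp D = .id ℝ ℂ)
    (hdet : 0 < D.det) : D = .id ℝ ℂ ∨ D = -.id ℝ ℂ := by
  obtain ⟨α, β, hαβ, hdet_eq⟩ := exists_wirtinger D
  have hone : D (D 1) = 1 := DFunLike.congr_fun hD 1
  have hI : D (D Complex.I) = Complex.I := DFunLike.congr_fun hD Complex.I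
  simp only [hαβ, map_add, map_mul, map_neg, map_one, Complex.conj_I, mul_one, neg_neg, mul_neg]
    at hone hI
  have hlin : α ^ 2 + β * conj β = 1 := by
    linear_combination hone / 2 - Complex.I * hI / 2 +
      (α ^ 2 - α * β - β * conj α + β * conj β - 1) / 2 * Complex.I_sq
  have hconj : β * (α + conj α) = 0 := by
    linear_combination hone - hlin
  rcases mul_eq_zero.1 hconj with hβ | hα
  · have hα : α = 1 ∨ α = -1 := sq_eq_one_iff.1 (by simpa [hβ] using hlin)
    refine hα.imp (fun hα ↦ ?_) (fun hα ↦ ?_) <;> ext w <;> simp [hαβ, hα, hβ]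
  · have hnorm : ((‖β‖ ^ 2 - ‖α‖ ^ 2 : ℝ) : ℂ) = 1 := by
      push_cast
      rw [← Complex.mul_conj', ← Complex.mul_conj']
      linear_combination hlin - α * hα
    have hnorm : ‖β‖ ^ 2 - ‖α‖ ^ 2 = 1 := mod_cast hnorm
    linarith

end Involution

section Identity

lemma eq_univ_of_accPt_imp_mem_nhds {X : Type*} [TopologicalSpace X] [T1Space X]
    [PreconnectedSpace X] [∀ x : X, NeBot (𝓝[≠] x)] {s : Set X}
    (hs : ∀ x, AccPt x (𝓟 s) → s ∈ 𝓝 x) {a : X} (ha : AccPt a (𝓟 s)) : s = Set.univ := by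
  have hderived : derivedSet s = interior s := by
    ext x
    refine ⟨fun hx ↦ mem_interior_iff_mem_nhds.2 (hs x hx), fun hx ↦ ?_⟩
    refine accPt_iff_frequently_nhdsNE.2 (Eventually.frequently ?_)
    exact nhdsWithin_le_nhds (mem_interior_iff_mem_nhds.1 hx)
  have hclopen : IsClopen (interior s) := ⟨hderived ▸ isClosed_derivedSet s, isOpen_interior⟩
  exact interior_eq_univ.1 (hclopen.eq_univ ⟨a, hderived ▸ ha⟩)

end Identity

section Derivatives

lemma hasFDerivAt_smul_of_eq_zero {𝕜 𝕜' E F : Type*} [NontriviallyNormedField 𝕜] [NormedField 𝕜']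
    [NormedAlgebra 𝕜 𝕜'] [NormedAddCommGroup E] [NormedSpace 𝕜 E] [NormedAddCommGroup F]
    [NormedSpace 𝕜 F] [NormedSpace 𝕜' F] [IsScalarTower 𝕜 𝕜' F] {c : E → 𝕜'} {g : E → F}
    {g' : E →L[𝕜] F} {a : E} (hc : ContinuousAt c a) (hg : HasFDerivAt g g' a) (ha : g a = 0) :
    HasFDerivAt (fun z ↦ c z • g z) (c a • g') a := by
  refine .of_isLittleO ?_
  have hc_sub : (fun z ↦ c z - c a) =o[𝓝 a] fun _ ↦ (1 : ℝ) :=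
    (Asymptotics.isLittleO_one_iff ℝ).2 (tendsto_sub_nhds_zero_iff.2 hc)
  have hremainder := (hc.isBigO_one ℝ).smul_isLittleO hg.isLittleO.norm_right
  have hvariation := hc_sub.smul_isBigO (g'.isBigO_sub (𝓝 a) a).norm_right
  simp only [one_smul] at hremainder hvariation
  refine ((hremainder.add hvariation).congr_left fun z ↦ ?_).of_norm_right
  simp only [ha, _root_.smul_apply]
  module

lemma det_complex_smul (c : ℂ) (D : ℂ →L[ℝ] ℂ) : (c • D).det = ‖c‖ ^ 2 * D.det := by
  have hcomp : ((c • D : ℂ →L[ℝ] ℂ) : ℂ →ₗ[ℝ] ℂ) = LinearMap.mulLeft ℝ c ∘ₗ (D : ℂ →ₗ[ℝ] ℂ) := by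
    ext w; rfl
  have hnorm : LinearMap.det (LinearMap.mulLeft ℝ c) = ‖c‖ ^ 2 := by
    rw [Complex.sq_norm, ← Algebra.norm_complex_apply]
    rfl
  rw [ContinuousLinearMap.det, hcomp, LinearMap.det_comp, hnorm]

end Derivatives

section StereoForm

/-- The map `h : 𝕊² → 𝕊²` read in the stereographic coordinate, with the junk value `0` where `h`
hits `southPole`. -/
noncomputable def stereoForm (h : 𝕊² → 𝕊²) (z : ℂ) : ℂ :=
  stereoCoord (h (stereoInv z))

variable {h : 𝕊² → 𝕊²} {a : ℂ}

lemma stereoForm_eq_self (ha : h (stereoInv a) = stereoInv a) : stereoForm h a = a := by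
  rw [stereoForm, ha, stereoCoord_stereoInv]

lemma stereoInv_stereoForm (ha : h (stereoInv a) ≠ southPole) :
    stereoInv (stereoForm h a) = h (stereoInv a) :=
  stereoInv_stereoCoord ha

lemma apply_stereoInv_ne_southPole (ha : h (stereoInv a) = stereoInv a) :
    h (stereoInv a) ≠ southPole := by
  rw [ha]
  exact stereoInv_ne_southPole a

section Smooth

variable (hsmooth : ContDiff ℝ 1 fun z ↦ (h (stereoInv z) : ℝ³))
include hsmooth

lemma continuous_comp_stereoInv : Continuous fun z ↦ h (stereoInv z) :=
  continuous_induced_rng.2 hsmooth.continuous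

lemma hasStrictFDerivAt_stereoForm (ha : h (stereoInv a) ≠ southPole) :
    HasStrictFDerivAt (stereoForm h) (fderiv ℝ (stereoForm h) a) a :=
  ((contDiffAt_stereoCoord ha).comp a hsmooth.contDiffAt).hasStrictFDerivAt one_ne_zero

lemma eventually_ne_southPole (ha : h (stereoInv a) ≠ southPole) :
    ∀ᶠ z in 𝓝 a, h (stereoInv z) ≠ southPole :=
  (continuous_comp_stereoInv hsmooth).continuousAt.eventually_ne ha

variable (hinv : Function.Involutive h)
include hinv

lemma eventually_stereoForm_stereoForm (ha : h (stereoInv a) ≠ southPole) :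
    ∀ᶠ z in 𝓝 a, stereoForm h (stereoForm h z) = z := by
  filter_upwards [eventually_ne_southPole hsmooth ha] with z hz
  rw [stereoForm, stereoInv_stereoForm hz, hinv, stereoCoord_stereoInv]

variable (ha : h (stereoInv a) = stereoInv a)
include ha

lemma fderiv_stereoForm_comp_self :
    (fderiv ℝ (stereoForm h) a).comp (fderiv ℝ (stereoForm h) a) = .id ℝ ℂ := by
  have hne := apply_stereoInv_ne_southPole ha
  exact hasFDerivAt_comp_self_of_involutive (hasStrictFDerivAt_stereoForm hsmooth hne).hasFDerivAt
    (stereoForm_eq_self ha) (eventually_stereoForm_stereoForm hsmooth hinv hne)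

lemma eventually_eq_self_of_fderiv_eq_id (hD : fderiv ℝ (stereoForm h) a = .id ℝ ℂ) :
    ∀ᶠ z in 𝓝 a, h (stereoInv z) = stereoInv z := by
  have hne := apply_stereoInv_ne_southPole ha
  filter_upwards [eventually_ne_southPole hsmooth hne,
    eventually_eq_self_of_involutive (hD ▸ hasStrictFDerivAt_stereoForm hsmooth hne)
      (stereoForm_eq_self ha) (eventually_stereoForm_stereoForm hsmooth hinv hne)] with z hz hfix
  rw [← stereoInv_stereoForm hz, hfix]

omit hinv in
lemma not_accPt_of_fderiv_eq_neg_id (hD : fderiv ℝ (stereoForm h) a = -.id ℝ ℂ) :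
    ¬ AccPt a (𝓟 {z | h (stereoInv z) = stereoInv z}) := by
  have hne := apply_stereoInv_ne_southPole ha
  have hderiv := (hasStrictFDerivAt_stereoForm hsmooth hne).hasFDerivAt.sub (hasFDerivAt_id a)
  have hanti : AntilipschitzWith 1 (fderiv ℝ (stereoForm h) a - ContinuousLinearMap.id ℝ ℂ) :=
    AddMonoidHomClass.antilipschitz_of_bound _ fun w ↦ by
      have hnorm : ‖-w - w‖ = 2 * ‖w‖ := by
        rw [← neg_add', norm_neg, ← two_mul, norm_mul, Complex.norm_ofNat]
      simpa [hD, hnorm] using le_mul_of_one_le_left (norm_nonneg w) one_le_two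
  refine fun hacc ↦ accPt_iff_frequently_nhdsNE.1 hacc ?_
  filter_upwards [hderiv.eventually_ne ⟨_, hanti⟩ (c := 0)] with z hz hfix
  exact hz (sub_eq_zero.2 (stereoForm_eq_self hfix))

end Smooth

end StereoForm

section Coincidence

/-- A function on the stereographic chart whose zeros are the coincidences of `h ∘ stereoInv` and
`stereoInv ∘ b`, where `M` is a spin lift of `h`. It extends the product of the nonvanishing factor
`homogeneousLift M z 0` and `stereoForm h z - b z` continuously over the points that `h` sends
to `southPole`. -/
noncomputable def coincidenceForm (M : 𝕊² → Matrix (Fin 2) (Fin 2) ℂ) (b : ℂ → ℂ) (z : ℂ) : ℂ :=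
  homogeneousLift M z 1 - b z * homogeneousLift M z 0

variable {h : 𝕊² → 𝕊²} {M : 𝕊² → Matrix (Fin 2) (Fin 2) ℂ} {b : ℂ → ℂ} {a z : ℂ}
  (hM : IsSpinLift M h)
include hM

lemma coincidenceForm_eq_zero_iff : coincidenceForm M b z = 0 ↔ h (stereoInv z) = stereoInv (b z) :=
  (isSpinor_homogeneousLift hM z).eq_stereoInv_iff.symm

lemma continuous_coincidenceForm (hb : Continuous b) : Continuous (coincidenceForm M b) :=
  have hcont (i : Fin 2) := (continuous_apply i).comp (continuous_homogeneousLift hM)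
  (hcont 1).sub (hb.mul (hcont 0))

lemma tendsto_coincidenceForm_const_div : Tendsto (fun z ↦ coincidenceForm M (fun _ ↦ a) z / z)
    (cocompact ℂ) (𝓝 ((M southPole *ᵥ ![0, 1]) 1 - a * (M southPole *ᵥ ![0, 1]) 0)) := by
  simpa only [coincidenceForm, sub_div, mul_div_assoc] using
    (tendsto_homogeneousLift_div hM 1).sub ((tendsto_homogeneousLift_div hM 0).const_mul a)

lemma tendsto_coincidenceForm_id_div : Tendsto (fun z ↦ coincidenceForm M id z / z ^ 2)
    (cocompact ℂ) (𝓝 (-(M southPole *ᵥ ![0, 1]) 0)) := by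
  have hlim := ((tendsto_homogeneousLift_div hM 1).mul tendsto_inv_cocompact).sub
    (tendsto_homogeneousLift_div hM 0)
  rw [mul_zero, zero_sub] at hlim
  refine hlim.congr' ?_
  filter_upwards [(eventually_cofinite_ne (0 : ℂ)).filter_mono (cocompact_le_cofinite)] with z hz
  rw [coincidenceForm, id]
  field_simp

lemma homogeneousLift_apply_zero_ne_zero (ha : h (stereoInv a) ≠ southPole) :
    homogeneousLift M a 0 ≠ 0 :=
  fun h0 ↦ ha ((isSpinor_homogeneousLift hM a).eq_southPole h0)

lemma hasFDerivAt_coincidenceForm (hsmooth : ContDiff ℝ 1 fun z ↦ (h (stereoInv z) : ℝ³))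
    (ha : h (stereoInv a) = stereoInv a) {B : ℂ →L[ℝ] ℂ} (hb : HasFDerivAt b B a) (hba : b a = a) :
    HasFDerivAt (coincidenceForm M b)
      (homogeneousLift M a 0 • (fderiv ℝ (stereoForm h) a - B)) a := by
  have hne := apply_stereoInv_ne_southPole ha
  have hcont : ContinuousAt (fun z ↦ homogeneousLift M z 0) a :=
    ((continuous_apply 0).comp (continuous_homogeneousLift hM)).continuousAt
  refine (hasFDerivAt_smul_of_eq_zero hcont
    ((hasStrictFDerivAt_stereoForm hsmooth hne).hasFDerivAt.sub hb) ?_).congr_of_eventuallyEq ?_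
  · rw [Pi.sub_apply, stereoForm_eq_self ha, hba, sub_self]
  · filter_upwards [eventually_ne_southPole hsmooth hne] with z hz
    rw [coincidenceForm, (isSpinor_homogeneousLift hM z).apply_one_eq hz, ← sub_mul, mul_comm]
    rfl

lemma det_fderiv_coincidenceForm_const_pos (hinj : Function.Injective h)
    (ha : h (stereoInv a) = stereoInv a)
    (hdet : (fderiv ℝ (coincidenceForm M fun _ ↦ a) a).det ≠ 0) :
    0 < (fderiv ℝ (coincidenceForm M fun _ ↦ a) a).det := by
  have hzero (z : ℂ) : coincidenceForm M (fun _ ↦ a) z = 0 ↔ z ∈ ({a} : Finset ℂ) := by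
    rw [coincidenceForm_eq_zero_iff hM, Finset.mem_singleton, ← ha, hinj.eq_iff,
      stereoInv_injective.eq_iff]
  have hlead : (M southPole *ᵥ ![0, 1]) 1 - a * (M southPole *ᵥ ![0, 1]) 0 ≠ 0 := fun h0 ↦
    stereoInv_ne_southPole a <| hinj <|
      ha.trans ((hM.isSpinor isSpinor_southPole).eq_stereoInv_iff.2 h0).symm
  have hsum := sum_sign_det_fderiv_eq (k := 1) {a} (continuous_coincidenceForm hM continuous_const)
    hzero (by simpa using hdet) hlead (by simpa using tendsto_coincidenceForm_const_div hM)
  rw [Finset.sum_singleton] at hsum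
  exact sign_eq_one_iff.1 ((by decide : ∀ s : SignType, (s : ℤ) = 1 → s = 1) _ hsum)

end Coincidence

section Lefschetz

variable {h : 𝕊² → 𝕊²} {M : 𝕊² → Matrix (Fin 2) (Fin 2) ℂ} {a : ℂ} (hM : IsSpinLift M h)
  (hsmooth : ContDiff ℝ 1 fun z ↦ (h (stereoInv z) : ℝ³)) (hinv : Function.Involutive h)
include hM hsmooth hinv

lemma det_fderiv_stereoForm_pos (ha : h (stereoInv a) = stereoInv a) :
    0 < (fderiv ℝ (stereoForm h) a).det := by
  have hdet : (fderiv ℝ (stereoForm h) a).det ≠ 0 := by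
    have hsq := congrArg (fun D : ℂ →L[ℝ] ℂ ↦ LinearMap.det (D : ℂ →ₗ[ℝ] ℂ))
      (fderiv_stereoForm_comp_self hsmooth hinv ha)
    rw [ContinuousLinearMap.toLinearMap_comp, LinearMap.det_comp, ContinuousLinearMap.coe_id,
      LinearMap.det_id] at hsq
    exact left_ne_zero_of_mul_eq_one hsq
  have hlift := homogeneousLift_apply_zero_ne_zero hM (apply_stereoInv_ne_southPole ha)
  have hderiv := hasFDerivAt_coincidenceForm hM hsmooth ha (hasFDerivAt_const a a) rfl
  have hpos := det_fderiv_coincidenceForm_const_pos hM hinv.injective ha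
  rw [hderiv.fderiv, sub_zero, det_complex_smul] at hpos
  exact (mul_pos_iff_of_pos_left (by positivity)).1 (hpos (by positivity))

lemma fderiv_stereoForm_eq_neg_id (hpole : h southPole ≠ southPole)
    (ha : h (stereoInv a) = stereoInv a) : fderiv ℝ (stereoForm h) a = -.id ℝ ℂ := by
  have hdichotomy {b : ℂ} (hb : h (stereoInv b) = stereoInv b) :=
    eq_id_or_eq_neg_id_of_comp_self (fderiv_stereoForm_comp_self hsmooth hinv hb)
      (det_fderiv_stereoForm_pos hM hsmooth hinv hb)
  refine (hdichotomy ha).resolve_left fun hid ↦ hpole ?_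
  have hclosed : IsClosed {z | h (stereoInv z) = stereoInv z} :=
    isClosed_eq (continuous_comp_stereoInv hsmooth) continuous_stereoInv
  have hfixed : {z | h (stereoInv z) = stereoInv z} = Set.univ := by
    refine eq_univ_of_accPt_imp_mem_nhds (fun b hacc ↦ ?_) (a := a) ?_
    · have hb : h (stereoInv b) = stereoInv b :=
        isClosed_iff_clusterPt.1 hclosed b hacc.clusterPt
      exact eventually_eq_self_of_fderiv_eq_id hsmooth hinv hb <| (hdichotomy hb).resolve_right
        fun hneg ↦ not_accPt_of_fderiv_eq_neg_id hsmooth hb hneg hacc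
    · exact accPt_iff_frequently_nhdsNE.2 <| Eventually.frequently <| nhdsWithin_le_nhds <|
        eventually_eq_self_of_fderiv_eq_id hsmooth hinv ha hid
  by_contra hne
  have himage : h (h southPole) = h southPole := by
    rw [← stereoInv_stereoCoord hne]
    exact Set.eq_univ_iff_forall.1 hfixed _
  exact hpole (hinv.injective himage)

lemma det_fderiv_coincidenceForm_id_pos (hpole : h southPole ≠ southPole)
    (ha : h (stereoInv a) = stereoInv a) :
    0 < (fderiv ℝ (coincidenceForm M id) a).det := by
  have hscale : homogeneousLift M a 0 * -2 ≠ 0 := mul_ne_zero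
    (homogeneousLift_apply_zero_ne_zero hM (apply_stereoInv_ne_southPole ha)) (by norm_num)
  have htwice : -.id ℝ ℂ - .id ℝ ℂ = (-2 : ℂ) • ContinuousLinearMap.id ℝ ℂ := by module
  have hid : (ContinuousLinearMap.id ℝ ℂ).det = 1 := LinearMap.det_id
  rw [(hasFDerivAt_coincidenceForm hM hsmooth ha (hasFDerivAt_id a) rfl).fderiv,
    fderiv_stereoForm_eq_neg_id hM hsmooth hinv hpole ha, htwice, smul_smul, det_complex_smul, hid,
    mul_one]
  exact pow_pos (norm_pos_iff.2 hscale) 2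

lemma ncard_fixedPoints_eq_two (hpole : h southPole ≠ southPole) : {x | h x = x}.ncard = 2 := by
  have himage : {x | h x = x} = stereoInv '' {z | coincidenceForm M id z = 0} := by
    ext x
    simp only [coincidenceForm_eq_zero_iff hM, Set.mem_image, Set.mem_ofPred_eq, id]
    refine ⟨fun hx ↦ ?_, by rintro ⟨z, hz, rfl⟩; exact hz⟩
    have hne : x ≠ southPole := by rintro rfl; exact hpole hx
    exact ⟨stereoCoord x, by rwa [stereoInv_stereoCoord hne], stereoInv_stereoCoord hne⟩
  have hlead : (M southPole *ᵥ ![0, 1]) 0 ≠ 0 := fun h0 ↦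
    hpole ((hM.isSpinor isSpinor_southPole).eq_southPole h0)
  rw [himage, Set.ncard_image_of_injective _ stereoInv_injective]
  exact_mod_cast ncard_zeros_eq (k := 2) (continuous_coincidenceForm hM continuous_id)
    (fun a ha ↦ det_fderiv_coincidenceForm_id_pos hM hsmooth hinv hpole
      ((coincidenceForm_eq_zero_iff hM).1 ha))
    (neg_ne_zero.2 hlead) (tendsto_coincidenceForm_id_div hM)

end Lefschetz

section Conjugation

lemma homotopic_id_conj {X Y : Type*} [TopologicalSpace X] [TopologicalSpace Y] (e : X ≃ₜ Y)
    {φ : C(Y, Y)} (hφ : φ.Homotopic (.id Y)) :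
    ((e.symm : C(Y, X)).comp (φ.comp (e : C(X, Y)))).Homotopic (.id X) := by
  have hconj := (ContinuousMap.Homotopic.refl (e.symm : C(Y, X))).comp
    (hφ.comp (.refl (e : C(X, Y))))
  rwa [ContinuousMap.id_comp, Homeomorph.symm_comp_toContinuousMap] at hconj

lemma ncard_fixedPoints_conj {X Y : Type*} (e : X ≃ Y) (f : Y → Y) :
    {x | e.symm (f (e x)) = x}.ncard = {y | f y = y}.ncard := by
  rw [← Set.ncard_image_of_injective _ e.injective, e.image_eq_preimage_symm]
  congr 1
  ext y
  simp

/-- The action of a linear isometry of `ℝ³` on the unit sphere. -/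
noncomputable def sphereIsometry (L : ℝ³ ≃ₗᵢ[ℝ] ℝ³) : 𝕊² ≃ₜ 𝕊² :=
  L.toHomeomorph.subtype fun x ↦ by simp

lemma exists_sphereIsometry_apply_eq (x y : 𝕊²) : ∃ L, sphereIsometry L x = y :=
  ⟨(ℝ ∙ ((x : ℝ³) - y))ᗮ.reflection, Subtype.ext <| Submodule.reflection_sub <| by simp⟩

lemma contDiff_conj_stereoInv [Fact (Module.finrank ℝ ℝ³ = 2 + 1)] {h : 𝕊² → 𝕊²}
    {n : WithTop ℕ∞} (hh : ContMDiff (𝓡 2) (𝓡 2) n h) (L : ℝ³ ≃ₗᵢ[ℝ] ℝ³) :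
    ContDiff ℝ n fun z ↦
      ((sphereIsometry L).symm (h (sphereIsometry L (stereoInv z))) : ℝ³) := by
  have hinner : ContMDiff 𝓘(ℝ, ℂ) (𝓡 2) n fun z ↦ sphereIsometry L (stereoInv z) :=
    ContMDiff.codRestrict_sphere (L.contDiff.comp contDiff_stereoInv).contMDiff _
  exact L.symm.contDiff.comp (contMDiff_coe_sphere.comp (hh.comp hinner)).contDiff

end Conjugation

theorem sphere_involution_two_fixed_points
    [Fact (Module.finrank ℝ (EuclideanSpace ℝ (Fin 3)) = 2 + 1)]
    (h : Diffeomorph (𝓡 2) (𝓡 2)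
      (sphere (0 : EuclideanSpace ℝ (Fin 3)) 1)
      (sphere (0 : EuclideanSpace ℝ (Fin 3)) 1) 1)
    (hne : ∃ x, h x ≠ x)
    (hinv : ∀ x, h (h x) = x)
    (hor : ContinuousMap.Homotopic ⟨h, h.continuous⟩ (ContinuousMap.id _)) :
    Set.ncard {x | h x = x} = 2 := by
  obtain ⟨p, hp⟩ := hne
  obtain ⟨L, hL⟩ := exists_sphereIsometry_apply_eq southPole p
  set e := sphereIsometry L
  obtain ⟨M, hM⟩ := exists_isSpinLift_of_homotopic_id (homotopic_id_conj e hor)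
  have hinvolutive : Function.Involutive fun x ↦ e.symm (h (e x)) := fun x ↦ by simp [hinv]
  have hpole : e.symm (h (e southPole)) ≠ southPole := by
    rwa [Ne, Homeomorph.symm_apply_eq, hL]
  rw [← ncard_fixedPoints_conj e.toEquiv h]
  exact ncard_fixedPoints_eq_two hM (contDiff_conj_stereoInv h.contMDiff L) hinvolutive hpole
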